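/- arXiv:1606.01199 — 7 statements merged into one kernel-verified Lean document; each statement's English description precedes it below -/
import Mathlib

section
/- Let M be a nondeterministic finite automaton over alphabet α with a finite state type σ, and let n be a natural number. If M accepts some word of length greater than n, then M accepts some word w' with n < |w'| ≤ n + (number of states of M). -/
/-!
Among the accepted words of length greater than `n`, take a shortest one, `w`. For each
`i ≤ card σ` choose a state that `w.take i` reaches and from which `w.drop i` is accepted; these
states need not lie on a common run. Two positions `i < j` share their state, so deleting the
letters between them leaves an accepted word. If `w` were longer than `n + card σ`, this shorter
word would still be longer than `n`, because `j - i ≤ card σ`.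
-/

theorem exists_lt_le_card_map_eq {β : Type*} [Fintype β] (f : ℕ → β) :
    ∃ i j, i < j ∧ j ≤ Fintype.card β ∧ f i = f j := by
  obtain ⟨i, j, hne, hf⟩ := Fintype.exists_ne_map_eq_of_card_lt
    (fun i : Fin (Fintype.card β + 1) => f i) (by simp)
  wlog hij : i < j generalizing i j
  · exact this j i hne.symm hf.symm (hne.lt_or_gt.resolve_left hij)
  exact ⟨i, j, hij, Nat.le_of_lt_succ j.isLt, hf⟩

section

variable {α σ : Type*} {M : NFA α σ} {S : Set σ}

theorem mem_acceptsFrom_iff_exists_singleton {x : List α} :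
    x ∈ M.acceptsFrom S ↔ ∃ q ∈ S, x ∈ M.acceptsFrom {q} := by
  simp only [NFA.mem_acceptsFrom, NFA.mem_evalFrom_iff_exists (S := S)]
  tauto

theorem append_mem_acceptsFrom_iff_exists {x y : List α} :
    x ++ y ∈ M.acceptsFrom S ↔ ∃ q ∈ M.evalFrom S x, y ∈ M.acceptsFrom {q} := by
  rw [M.append_mem_acceptsFrom, mem_acceptsFrom_iff_exists_singleton]

theorem exists_take_append_drop_mem_acceptsFrom [Fintype σ] {x : List α}
    (hx : x ∈ M.acceptsFrom S) :
    ∃ i j, i < j ∧ j ≤ Fintype.card σ ∧ x.take i ++ x.drop j ∈ M.acceptsFrom S := by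
  have exists_state (i : ℕ) : ∃ q ∈ M.evalFrom S (x.take i), x.drop i ∈ M.acceptsFrom {q} := by
    rwa [← append_mem_acceptsFrom_iff_exists, List.take_append_drop]
  choose q reachable accepting using exists_state
  obtain ⟨i, j, hij, hj, hq⟩ := exists_lt_le_card_map_eq q
  exact ⟨i, j, hij, hj,
    append_mem_acceptsFrom_iff_exists.2 ⟨q i, reachable i, hq ▸ accepting j⟩⟩

end

/-- if an NFA accepts a word longer than `n`, it accepts a word `w'`
with `n < |w'| ≤ n + (number of states)`. -/
theorem stmt_3 {α : Type*} {σ : Type*} [Fintype σ] (M : NFA α σ) (n : ℕ)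
    (h : ∃ w ∈ M.accepts, n < w.length) :
    ∃ w' ∈ M.accepts, n < w'.length ∧ w'.length ≤ n + Fintype.card σ := by
  obtain ⟨w, ⟨hw, hn⟩, shortest⟩ := exists_minimalFor_of_wellFoundedLT
    (fun w => w ∈ M.accepts ∧ n < w.length) List.length h
  refine ⟨w, hw, hn, not_lt.1 fun hlong => ?_⟩
  obtain ⟨i, j, hij, hj, hw'⟩ := exists_take_append_drop_mem_acceptsFrom hw
  have length_eq : (w.take i ++ w.drop j).length = w.length - (j - i) := by
    simp only [List.length_append, List.length_take, List.length_drop]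
    omega
  have length_le : w.length ≤ (w.take i ++ w.drop j).length :=
    shortest ⟨hw', by omega⟩ (by omega)
  omega
end

section
/- Let M be a nondeterministic finite automaton over alphabet α with finite state type σ, and let u, v be words over α. Then M.accepts ⊆ u ⧢ v if and only if every word w ∈ M.accepts with |w| ≤ |u| + |v| + (number of states of M) belongs to u ⧢ v. (Equivalently: non-inclusion L(M) ⊄ u ⧢ v is always witnessed by an accepted word of length at most |u| + |v| + |Q|.) -/
/-- `IsShuffle u v w` holds iff `w` is an interleaving of `u` and `v`,
i.e. `w = u₁v₁u₂v₂⋯uₙvₙ` for some decompositions `u = u₁⋯uₙ`, `v = v₁⋯vₙ`. -/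
inductive IsShuffle {α : Type*} : List α → List α → List α → Prop
  | nil : IsShuffle [] [] []
  | left {a : α} {u v w : List α} : IsShuffle u v w → IsShuffle (a :: u) v (a :: w)
  | right {a : α} {u v w : List α} : IsShuffle u v w → IsShuffle u (a :: v) (a :: w)

/-- The shuffle `u ⧢ v` of two words, as a set of words. -/
def wordShuffle {α : Type*} (u v : List α) : Set (List α) := {w | IsShuffle u v w}

/-- The shuffle of two languages. -/
def langShuffle {α : Type*} (L₁ L₂ : Set (List α)) : Set (List α) :=
  ⋃ u ∈ L₁, ⋃ v ∈ L₂, wordShuffle u v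

/-! Every word of `u ⧢ v` has length `|u| + |v|`, so every longer accepted word is a witness of
non-inclusion. A shortest one has length at most `|u| + |v| + |Q|`: otherwise the pigeonhole
principle lets us cut out a nonempty factor of length at most `|Q|`, leaving an accepted word which
is shorter but still longer than `|u| + |v|`. -/

theorem IsShuffle.length_eq {α : Type*} {u v w : List α} (h : IsShuffle u v w) :
    w.length = u.length + v.length := by
  induction h <;> grind

section NFA

variable {α σ : Type*} {M : NFA α σ} {S : Set σ} {t : σ} {w : List α}

theorem mem_evalFrom_append_iff_exists {x y : List α} :
    t ∈ M.evalFrom S (x ++ y) ↔ ∃ q ∈ M.evalFrom S x, t ∈ M.evalFrom {q} y := by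
  rw [NFA.evalFrom_append, NFA.mem_evalFrom_iff_exists]

variable [Fintype σ]

theorem exists_append_mem_evalFrom_of_card_le (ht : t ∈ M.evalFrom S w)
    (hw : Fintype.card σ ≤ w.length) :
    ∃ x y z, w = x ++ y ++ z ∧ x.length + y.length ≤ Fintype.card σ ∧ y ≠ [] ∧
      t ∈ M.evalFrom S (x ++ z) := by
  have exists_mid (i : ℕ) :
      ∃ q ∈ M.evalFrom S (w.take i), t ∈ M.evalFrom {q} (w.drop i) := by
    rwa [← mem_evalFrom_append_iff_exists, List.take_append_drop]
  choose q hq_take hq_drop using exists_mid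
  -- The states `q i` may come from different runs: cutting needs only `q i = q j`, not a loop.
  obtain ⟨i, j, hne, hq⟩ := Fintype.exists_ne_map_eq_of_card_lt
    (fun i : Fin (Fintype.card σ + 1) => q i) (by simp)
  wlog hij : i < j generalizing i j
  · exact this j i hne.symm hq.symm (hne.lt_or_gt.resolve_left hij)
  have htake : (w.take j).take i = w.take i := by
    rw [List.take_take, min_eq_left (Fin.le_def.mp hij.le)]
  refine ⟨w.take i, (w.take j).drop i, w.drop j, ?_, ?_, ?_, ?_⟩
  · rw [← htake, List.take_append_drop, List.take_append_drop]
  · simp only [List.length_drop, List.length_take]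
    lia
  · simp only [ne_eq, List.drop_eq_nil_iff, List.length_take]
    lia
  · exact mem_evalFrom_append_iff_exists.mpr ⟨q j, hq ▸ hq_take i, hq_drop j⟩

theorem exists_mem_accepts_length_mem_Ico {n : ℕ} (hw : w ∈ M.accepts) (hn : n ≤ w.length) :
    ∃ x ∈ M.accepts, x.length ∈ Set.Ico n (n + Fintype.card σ) := by
  obtain ⟨x, ⟨hx, hnx⟩, hmin⟩ := exists_minimalFor_of_wellFoundedLT
    (fun x => x ∈ M.accepts ∧ n ≤ x.length) List.length ⟨w, hw, hn⟩
  refine ⟨x, hx, hnx, ?_⟩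
  by_contra! hlong
  obtain ⟨t, ht, htx⟩ := NFA.mem_accepts.mp hx
  obtain ⟨a, b, c, rfl, hab, hb, hac⟩ := exists_append_mem_evalFrom_of_card_le htx (by lia)
  have hac_mem : a ++ c ∈ M.accepts := NFA.mem_accepts.mpr ⟨t, ht, hac⟩
  have hb_pos : 0 < b.length := List.length_pos_of_ne_nil hb
  have hn_le : n ≤ (a ++ c).length := by
    simp only [List.length_append] at hlong ⊢
    lia
  have hshorter : (a ++ c).length < (a ++ b ++ c).length := by
    simp only [List.length_append]
    lia
  exact hshorter.not_ge (hmin ⟨hac_mem, hn_le⟩ hshorter.le)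

theorem accepts_le_iff_of_length_le {L : Language α} {n : ℕ} (hL : ∀ w ∈ L, w.length ≤ n) :
    M.accepts ≤ L ↔ ∀ w ∈ M.accepts, w.length ≤ n + Fintype.card σ → w ∈ L := by
  refine ⟨fun h w hw _ => h hw, fun h w hw => ?_⟩
  by_cases hlen : w.length ≤ n + Fintype.card σ
  · exact h w hw hlen
  obtain ⟨x, hx, hnx, hxn⟩ := exists_mem_accepts_length_mem_Ico hw (n := n + 1) (by lia)
  have hxL : x ∈ L := h x hx (by lia)
  exact absurd (hL x hxL) (by lia)

end NFA

/-- `L(M) ⊆ u ⧢ v` iff every accepted word of length at most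
`|u| + |v| + |Q|` lies in `u ⧢ v`. -/
theorem stmt_4 {α : Type*} {σ : Type*} [Fintype σ] (M : NFA α σ) (u v : List α) :
    (∀ w ∈ M.accepts, w ∈ wordShuffle u v) ↔
      (∀ w ∈ M.accepts, w.length ≤ u.length + v.length + Fintype.card σ →
        w ∈ wordShuffle u v) :=
  accepts_le_iff_of_length_le (L := wordShuffle u v) fun _ hw => hw.length_eq.le
end

section
/- Let α be an alphabet and let Q₁, Q₂ be sets of multisets over α. Then the set of words whose letter-multiset lies in Q₁ + Q₂ = {m₁ + m₂ | m₁ ∈ Q₁, m₂ ∈ Q₂} equals the shuffle of the set of words whose letter-multiset lies in Q₁ with the set of words whose letter-multiset lies in Q₂. In symbols: ψ⁻¹(Q₁ + Q₂) = ψ⁻¹(Q₁) ⧢ ψ⁻¹(Q₂), where ψ maps a word to its letter-multiset. -/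
open Pointwise

/-!
If `ψ(w) = m₁ + m₂`, then `m₁ ≤ ψ(w)`, so some subword `u` of `w` has letter-multiset `m₁`. The
remaining letters form a word `v` with `w ∈ u ⧢ v`, and cancelling `m₁` gives `ψ(v) = m₂`.
Conversely, every `w ∈ u ⧢ v` is a permutation of `uv`, so `ψ(w) = ψ(u) + ψ(v)`.
-/

section

variable {α : Type*}

namespace IsShuffle

open scoped List

variable {u v w : List α}

theorem perm_append (h : IsShuffle u v w) : w ~ u ++ v := by
  induction h with
  | nil => exact .refl []
  | left _ ih => exact ih.cons _
  | right _ ih => exact (ih.cons _).trans List.perm_middle.symm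

theorem coe_eq_add (h : IsShuffle u v w) : (w : Multiset α) = u + v :=
  Multiset.coe_eq_coe.mpr h.perm_append

theorem exists_of_sublist (h : u <+ w) : ∃ v, IsShuffle u v w := by
  induction h with
  | slnil => exact ⟨[], nil⟩
  | cons a _ ih =>
    obtain ⟨v, hv⟩ := ih
    exact ⟨a :: v, hv.right⟩
  | cons_cons a _ ih =>
    obtain ⟨v, hv⟩ := ih
    exact ⟨v, hv.left⟩

end IsShuffle

theorem exists_isShuffle_of_coe_eq_add {w : List α} {m₁ m₂ : Multiset α}
    (h : (w : Multiset α) = m₁ + m₂) :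
    ∃ u v : List α, (u : Multiset α) = m₁ ∧ (v : Multiset α) = m₂ ∧ IsShuffle u v w := by
  induction m₁ using Quotient.inductionOn with | _ l
  have hle : (l : Multiset α) ≤ w := Multiset.le_iff_exists_add.mpr ⟨m₂, h⟩
  obtain ⟨u, hul, huw⟩ := Multiset.coe_le.mp hle
  have hu : (u : Multiset α) = l := Multiset.coe_eq_coe.mpr hul
  obtain ⟨v, huv⟩ := IsShuffle.exists_of_sublist huw
  have hv : (v : Multiset α) = m₂ := by
    apply add_left_cancel (a := (l : Multiset α))
    calc (l : Multiset α) + v = u + v := by rw [hu]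
      _ = w := huv.coe_eq_add.symm
      _ = l + m₂ := h
  exact ⟨u, v, hu, hv, huv⟩

theorem mem_langShuffle {L₁ L₂ : Set (List α)} {w : List α} :
    w ∈ langShuffle L₁ L₂ ↔ ∃ u ∈ L₁, ∃ v ∈ L₂, IsShuffle u v w := by
  simp only [langShuffle, wordShuffle, Set.mem_iUnion, Set.mem_ofPred_eq, exists_prop]

end

/-- `ψ⁻¹(Q₁ + Q₂) = ψ⁻¹(Q₁) ⧢ ψ⁻¹(Q₂)`, where `ψ` maps a word to
its letter-multiset and `Q₁ + Q₂ = {m₁ + m₂ | m₁ ∈ Q₁, m₂ ∈ Q₂}`. -/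
theorem stmt_5 {α : Type*} (Q₁ Q₂ : Set (Multiset α)) :
    {w : List α | (↑w : Multiset α) ∈ Q₁ + Q₂} =
      langShuffle {w : List α | (↑w : Multiset α) ∈ Q₁}
        {w : List α | (↑w : Multiset α) ∈ Q₂} := by
  ext w
  simp only [mem_langShuffle, Set.mem_ofPred_eq, Set.mem_add]
  constructor
  · rintro ⟨m₁, hm₁, m₂, hm₂, hw⟩
    obtain ⟨u, v, rfl, rfl, huv⟩ := exists_isShuffle_of_coe_eq_add hw.symm
    exact ⟨u, hm₁, v, hm₂, huv⟩
  · rintro ⟨u, hu, v, hv, huv⟩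
    exact ⟨u, hu, v, hv, huv.coe_eq_add.symm⟩
end

section
/- Over the two-letter alphabet {a,b}, the language L' = {aⁿ b^{m+1} a² bⁿ a^{m+1} | n, m ≥ 1} is not context-free. -/
/-!
In a parse tree, look at a lowest nonterminal `A` that has itself as a descendant: below it no
branch repeats a nonterminal, so the yield of its subtree is short. If the part of that yield
outside the lower `A` is nonempty, it can be pumped; otherwise the upper `A` can be contracted
onto the lower one without changing the word. Contracting as long as possible therefore ends in a
pumpable word or in a tree without repetitions, whose yield is short. This is the pumping lemma.

For `w = aⁿ bᵏ a² bⁿ aᵏ`, a prefix that is longer than `n` determines `n` and one that is longer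
than `n + k` determines `k` as well; suffixes are prefixes of the reversed word, in which `n` and
`k` are exchanged. If `n` and `k` exceed the length of the pumped factor, the unpumped prefix and
suffix of `w` thus determine `w` among all words of this shape, so that pumping leaves the language.
-/

section Derivations

variable {T : Type*} {g : ContextFreeGrammar T}

lemma derives_append {s₁ s₂ t₁ t₂ : List (Symbol T g.NT)} (h₁ : g.Derives s₁ t₁)
    (h₂ : g.Derives s₂ t₂) : g.Derives (s₁ ++ s₂) (t₁ ++ t₂) :=
  (h₁.append_right s₂).trans (h₂.append_left t₁)

lemma derives_nonterminal_cons {r : ContextFreeRule T g.NT} (hr : r ∈ g.rules)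
    {s t t' : List (Symbol T g.NT)} (ho : g.Derives r.output t) (hs : g.Derives s t') :
    g.Derives (.nonterminal r.input :: s) (t ++ t') :=
  ContextFreeGrammar.Produces.trans_derives ⟨r, hr, .head s⟩ (derives_append ho hs)

lemma derives_iterate {A : g.NT} {v y : List T}
    (h : g.Derives [.nonterminal A] (v.map .terminal ++ [.nonterminal A] ++ y.map .terminal))
    (i : ℕ) : g.Derives [.nonterminal A] ((List.replicate i v).flatten.map .terminal ++
      [.nonterminal A] ++ (List.replicate i y).flatten.map .terminal) := by
  induction i with
  | zero => exact .refl _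
  | succ i ih =>
    rw [List.replicate_succ, List.replicate_succ' (a := y)]
    refine h.trans ?_
    simpa using (ih.append_left (v.map .terminal)).append_right (y.map .terminal)

/-- The language of the words that `g` derives from the sentential form `s`. -/
def languageFrom (g : ContextFreeGrammar T) (s : List (Symbol T g.NT)) : Language T :=
  {w | g.Derives s (w.map .terminal)}

lemma append_mem_languageFrom {s₁ s₂ : List (Symbol T g.NT)} {w₁ w₂ : List T}
    (h₁ : w₁ ∈ languageFrom g s₁) (h₂ : w₂ ∈ languageFrom g s₂) :
    w₁ ++ w₂ ∈ languageFrom g (s₁ ++ s₂) := by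
  change g.Derives _ _
  rw [List.map_append]
  exact derives_append h₁ h₂

lemma languageFrom_le_of_produces {s s' : List (Symbol T g.NT)} (h : g.Produces s s') :
    languageFrom g s' ≤ languageFrom g s :=
  fun _ hw ↦ h.trans_derives hw

end Derivations

section Pumpable

variable {T : Type*} {L L' : Language T} {p : ℕ} {w : List T}

/-- The word `w` splits as `x v z y u` with `v` and `y` not both empty and `v z y` of length at
most `p`, such that all the words `x vⁱ z yⁱ u` lie in `L`. -/
def IsPumpable (L : Language T) (p : ℕ) (w : List T) : Prop :=
  ∃ x v z y u : List T, w = x ++ v ++ z ++ y ++ u ∧ (v ++ z ++ y).length ≤ p ∧ v ++ y ≠ [] ∧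
    ∀ i, x ++ (List.replicate i v).flatten ++ z ++ (List.replicate i y).flatten ++ u ∈ L

lemma IsPumpable.mono (h : IsPumpable L p w) (hL : L ≤ L') {q : ℕ} (hpq : p ≤ q) :
    IsPumpable L' q w := by
  obtain ⟨x, v, z, y, u, hw, hp, hne, hi⟩ := h
  exact ⟨x, v, z, y, u, hw, hp.trans hpq, hne, fun i ↦ hL (hi i)⟩

lemma IsPumpable.append_append (h : IsPumpable L p w) {w₁ w₂ : List T}
    (hL : ∀ w ∈ L, w₁ ++ w ++ w₂ ∈ L') : IsPumpable L' p (w₁ ++ w ++ w₂) := by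
  obtain ⟨x, v, z, y, u, rfl, hp, hne, hi⟩ := h
  refine ⟨w₁ ++ x, v, z, y, u ++ w₂, by simp, hp, hne, fun i ↦ ?_⟩
  simpa using hL _ (hi i)

lemma isPumpable_of_derives {g : ContextFreeGrammar T} {A : g.NT} {v z y : List T}
    (hA : g.Derives [.nonterminal A] (v.map .terminal ++ [.nonterminal A] ++ y.map .terminal))
    (hz : z ∈ languageFrom g [.nonterminal A]) (hne : v ++ y ≠ []) :
    IsPumpable (languageFrom g [.nonterminal A]) (v ++ z ++ y).length (v ++ z ++ y) := by
  refine ⟨[], v, z, y, [], by simp, le_rfl, hne, fun i ↦ ?_⟩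
  change g.Derives _ _
  simpa using (derives_iterate hA i).trans ((hz.append_left _).append_right _)

end Pumpable

/-- The nonterminals that `g` can rewrite. The type `g.NT` may be infinite, but this set is not,
and its cardinality bounds the height of a parse tree without repetitions. -/
def ruleInputs {T : Type*} (g : ContextFreeGrammar T) : Set g.NT :=
  ContextFreeRule.input '' (g.rules : Set (ContextFreeRule T g.NT))

lemma finite_ruleInputs {T : Type*} (g : ContextFreeGrammar T) : (ruleInputs g).Finite :=
  g.rules.finite_toSet.image _

/-- `AcyclicParse g F s w` means that there is a forest of parse trees with roots `s` and yield
`w` in which no branch repeats a nonterminal or meets `F`. -/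
inductive AcyclicParse {T : Type*} (g : ContextFreeGrammar T) :
    Set g.NT → List (Symbol T g.NT) → List T → Prop
  | nil (F : Set g.NT) : AcyclicParse g F [] []
  | terminal (t : T) {F : Set g.NT} {s : List (Symbol T g.NT)} {w : List T}
      (hs : AcyclicParse g F s w) : AcyclicParse g F (.terminal t :: s) (t :: w)
  | nonterminal {r : ContextFreeRule T g.NT} (hr : r ∈ g.rules) {F : Set g.NT}
      (hF : r.input ∉ F) {s : List (Symbol T g.NT)} {u w : List T}
      (ho : AcyclicParse g (insert r.input F) r.output u) (hs : AcyclicParse g F s w) :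
      AcyclicParse g F (.nonterminal r.input :: s) (u ++ w)

namespace AcyclicParse

variable {T : Type*} {g : ContextFreeGrammar T} {F : Set g.NT} {s : List (Symbol T g.NT)}
  {w : List T}

lemma map_terminal (F : Set g.NT) (w : List T) : AcyclicParse g F (w.map .terminal) w := by
  induction w with
  | nil => exact .nil F
  | cons t w ih => exact .terminal t ih

lemma singleton {r : ContextFreeRule T g.NT} (hr : r ∈ g.rules) (hF : r.input ∉ F)
    (h : AcyclicParse g (insert r.input F) r.output w) :
    AcyclicParse g F [.nonterminal r.input] w := by
  simpa using AcyclicParse.nonterminal hr hF h (.nil F)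

lemma mono (h : AcyclicParse g F s w) {F' : Set g.NT} (hF' : F' ⊆ F) :
    AcyclicParse g F' s w := by
  induction h generalizing F' with
  | nil => exact .nil F'
  | terminal t _ ih => exact .terminal t (ih hF')
  | nonterminal hr hF _ _ iho ihs =>
    exact .nonterminal hr (Set.notMem_subset hF' hF) (iho (Set.insert_subset_insert hF')) (ihs hF')

lemma append {s₁ s₂ : List (Symbol T g.NT)} {w₁ w₂ : List T}
    (h₁ : AcyclicParse g F s₁ w₁) (h₂ : AcyclicParse g F s₂ w₂) :
    AcyclicParse g F (s₁ ++ s₂) (w₁ ++ w₂) := by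
  induction h₁ with
  | nil => exact h₂
  | terminal t _ ih => exact .terminal t (ih h₂)
  | nonterminal hr hF ho _ _ ih =>
    rw [List.append_assoc]
    exact .nonterminal hr hF ho (ih h₂)

lemma exists_of_append {s₁ s₂ : List (Symbol T g.NT)} (h : AcyclicParse g F (s₁ ++ s₂) w) :
    ∃ w₁ w₂, w = w₁ ++ w₂ ∧ AcyclicParse g F s₁ w₁ ∧ AcyclicParse g F s₂ w₂ := by
  induction s₁ generalizing w with
  | nil => exact ⟨[], w, rfl, .nil F, h⟩
  | cons a s₁ ih =>
    rw [List.cons_append] at h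
    cases h with
    | terminal t hs =>
      obtain ⟨w₁, w₂, rfl, h₁, h₂⟩ := ih hs
      exact ⟨t :: w₁, w₂, rfl, .terminal t h₁, h₂⟩
    | @nonterminal r hr _ hF _ u _ ho hs =>
      obtain ⟨w₁, w₂, rfl, h₁, h₂⟩ := ih hs
      exact ⟨u ++ w₁, w₂, by simp, .nonterminal hr hF ho h₁, h₂⟩

lemma mem_languageFrom (h : AcyclicParse g F s w) : w ∈ languageFrom g s := by
  induction h with
  | nil => exact .refl _
  | terminal t _ ih => exact ih.append_left [.terminal t]
  | nonterminal hr _ _ _ iho ihs =>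
    change g.Derives _ _
    rw [List.map_append]
    exact derives_nonterminal_cons hr iho ihs

lemma length_le {b : ℕ} (hb : 0 < b) (hout : ∀ r ∈ g.rules, r.output.length ≤ b)
    (h : AcyclicParse g F s w) : w.length ≤ b ^ (ruleInputs g \ F).ncard * s.length := by
  induction h with
  | nil => simp
  | @terminal _ F _ _ _ ih =>
    simp only [List.length_cons, Nat.mul_succ]
    exact Nat.add_le_add ih (Nat.pow_pos hb)
  | @nonterminal r hr F hF s u w _ _ iho ihs =>
    have hcard : (ruleInputs g \ insert r.input F).ncard + 1 = (ruleInputs g \ F).ncard := by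
      rw [← Set.union_singleton, ← Set.sdiff_sdiff]
      exact Set.ncard_sdiff_singleton_add_one ⟨Set.mem_image_of_mem _ hr, hF⟩
        (finite_ruleInputs g).sdiff
    have hu : u.length ≤ b ^ (ruleInputs g \ F).ncard := by
      rw [← hcard, pow_succ]
      exact iho.trans (Nat.mul_le_mul_left _ (hout r hr))
    simp only [List.length_append, List.length_cons, Nat.mul_succ]
    omega

lemma insert_or_exists_derives (h : AcyclicParse g F s w) (A : g.NT) :
    AcyclicParse g (insert A F) s w ∨ ∃ v z y : List T, w = v ++ z ++ y ∧
      g.Derives s (v.map .terminal ++ [.nonterminal A] ++ y.map .terminal) ∧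
      AcyclicParse g ∅ [.nonterminal A] z := by
  induction h with
  | nil => exact .inl (.nil _)
  | terminal t _ ih =>
    obtain ih | ⟨v, z, y, rfl, hd, hz⟩ := ih
    · exact .inl (.terminal t ih)
    · exact .inr ⟨t :: v, z, y, rfl, hd.append_left [.terminal t], hz⟩
  | @nonterminal r hr F hF s u w ho hs iho ihs =>
    obtain rfl | hA := eq_or_ne r.input A
    · exact .inr ⟨[], u, w, rfl, hs.mem_languageFrom.append_left [_],
        (singleton hr hF ho).mono (Set.empty_subset F)⟩
    obtain iho | ⟨v, z, y, rfl, hd, hz⟩ := iho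
    · obtain ihs | ⟨v, z, y, rfl, hd, hz⟩ := ihs
      · rw [Set.insert_comm] at iho
        exact .inl (.nonterminal hr (by simp [hA, hF]) iho ihs)
      · refine .inr ⟨u ++ v, z, y, by simp, ?_, hz⟩
        simpa using derives_nonterminal_cons hr ho.mem_languageFrom hd
    · refine .inr ⟨v, z, y ++ w, by simp, ?_, hz⟩
      simpa using derives_nonterminal_cons hr hd hs.mem_languageFrom

lemma singleton_or_isPumpable {r : ContextFreeRule T g.NT} (h : AcyclicParse g ∅ r.output w)
    (hr : r ∈ g.rules) :
    AcyclicParse g ∅ [.nonterminal r.input] w ∨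
      IsPumpable (languageFrom g [.nonterminal r.input]) w.length w := by
  obtain h | ⟨v, z, y, rfl, hd, hz⟩ := h.insert_or_exists_derives r.input
  · exact .inl (singleton hr (Set.notMem_empty _) h)
  by_cases hne : v ++ y = []
  · obtain ⟨rfl, rfl⟩ := List.append_eq_nil_iff.mp hne
    exact .inl (by simpa using hz)
  · have hr' : g.Produces [.nonterminal r.input] r.output := ⟨r, hr, .input_output⟩
    exact .inr (isPumpable_of_derives (hr'.trans_derives hd) hz.mem_languageFrom hne)

end AcyclicParse

section PumpingLemma

variable {T : Type*} {g : ContextFreeGrammar T}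

lemma acyclicParse_or_isPumpable_of_produces {s s' : List (Symbol T g.NT)} {w : List T}
    (h : g.Produces s s') (hw : AcyclicParse g ∅ s' w) {p : ℕ}
    (hp : ∀ r ∈ g.rules, ∀ u, AcyclicParse g ∅ r.output u → u.length ≤ p) :
    AcyclicParse g ∅ s w ∨ IsPumpable (languageFrom g s) p w := by
  obtain ⟨r, hr, hrs⟩ := h
  obtain ⟨s₁, s₂, rfl, rfl⟩ := hrs.exists_parts
  obtain ⟨w', w₂, rfl, h', h₂⟩ := hw.exists_of_append
  obtain ⟨w₁, u, rfl, h₁, hu⟩ := h'.exists_of_append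
  obtain h | h := hu.singleton_or_isPumpable hr
  · exact .inl ((h₁.append h).append h₂)
  · exact .inr <| (h.mono le_rfl (hp r hr u hu)).append_append fun _ hv ↦
      append_mem_languageFrom (append_mem_languageFrom h₁.mem_languageFrom hv) h₂.mem_languageFrom

lemma acyclicParse_or_isPumpable {s : List (Symbol T g.NT)} {w : List T}
    (hw : w ∈ languageFrom g s) {p : ℕ}
    (hp : ∀ r ∈ g.rules, ∀ u, AcyclicParse g ∅ r.output u → u.length ≤ p) :
    AcyclicParse g ∅ s w ∨ IsPumpable (languageFrom g s) p w := by
  change g.Derives s _ at hw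
  induction hw using Relation.ReflTransGen.head_induction_on with
  | refl => exact .inl (.map_terminal ∅ w)
  | head h _ ih =>
    obtain ih | ih := ih
    · exact acyclicParse_or_isPumpable_of_produces h ih hp
    · exact .inr (ih.mono (languageFrom_le_of_produces h) le_rfl)

theorem pumping_lemma_of_isContextFree {L : Language T} (hL : L.IsContextFree) :
    ∃ p, ∀ w ∈ L, p ≤ w.length → IsPumpable L p w := by
  obtain ⟨g, rfl⟩ := hL
  obtain ⟨b, hb, hout⟩ : ∃ b, 1 < b ∧ ∀ r ∈ g.rules, r.output.length ≤ b :=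
    ⟨g.rules.sup (·.output.length) + 2, by omega,
      fun r hr ↦ Nat.le_add_right_of_le (Finset.le_sup (f := (·.output.length)) hr)⟩
  have hlen {s w} (h : AcyclicParse g ∅ s w) : w.length ≤ b ^ (ruleInputs g).ncard * s.length := by
    simpa using h.length_le (by omega) hout
  refine ⟨b ^ ((ruleInputs g).ncard + 1), fun w hw hlong ↦ ?_⟩
  refine (acyclicParse_or_isPumpable hw fun r hr u hu ↦ ?_).resolve_left fun h ↦ ?_
  · exact (hlen hu).trans (Nat.mul_le_mul_left _ (hout r hr))
  · have hshort : w.length ≤ b ^ (ruleInputs g).ncard := by simpa using hlen h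
    exact (hlong.trans hshort).not_gt (Nat.pow_lt_pow_succ hb)

end PumpingLemma

section CrossWord

variable {α : Type*} {a b : α}

lemma eq_of_replicate_append_cons_prefix {n m : ℕ} {s t : List α} (hab : a ≠ b)
    (ht : t.head? ≠ some a) (h : List.replicate n a ++ b :: s <+: List.replicate m a ++ t) :
    n = m := by
  induction n generalizing m with
  | zero =>
    cases m with
    | zero => rfl
    | succ m => exact absurd (List.cons_prefix_cons.mp h).1 hab.symm
  | succ n ih =>
    cases m with
    | zero =>
      obtain ⟨r, rfl⟩ := h
      exact absurd rfl ht
    | succ m =>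
      exact congrArg Nat.succ (ih (List.cons_prefix_cons.mp h).2)

/-- The word `aⁿ bᵏ a² bⁿ aᵏ`, in which two pairs of blocks of equal length cross. -/
def crossWord (a b : α) (n k : ℕ) : List α :=
  List.replicate n a ++ List.replicate k b ++ List.replicate 2 a ++ List.replicate n b ++
    List.replicate k a

lemma length_crossWord (a b : α) (n k : ℕ) : (crossWord a b n k).length = 2 * (n + k + 1) := by
  simp only [crossWord, List.length_append, List.length_replicate]
  omega

lemma reverse_crossWord (a b : α) (n k : ℕ) : (crossWord a b n k).reverse = crossWord a b k n := by
  simp [crossWord]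

variable {x u : List α} {n k n' k' : ℕ}

lemma left_eq_of_prefix_crossWord (hab : a ≠ b) (hk : 0 < k) (hk' : 0 < k')
    (h : x <+: crossWord a b n k) (h' : x <+: crossWord a b n' k') (hx : n < x.length) :
    n = n' := by
  have hblock : List.replicate n a ++ [b] <+: crossWord a b n k := by
    obtain ⟨k, rfl⟩ := Nat.exists_eq_add_of_lt hk
    simp [crossWord, List.replicate_succ]
  have hblock' := (List.prefix_of_prefix_length_le hblock h (by simpa)).trans h'
  simp only [crossWord, List.append_assoc] at hblock'
  refine eq_of_replicate_append_cons_prefix hab ?_ hblock'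
  simp [List.head?_append, List.head?_replicate, hk'.ne', hab.symm]

lemma eq_of_prefix_crossWord (hab : a ≠ b) (hk : 0 < k) (hk' : 0 < k')
    (h : x <+: crossWord a b n k) (h' : x <+: crossWord a b n' k') (hx : n + k < x.length) :
    n = n' ∧ k = k' := by
  obtain rfl := left_eq_of_prefix_crossWord hab hk hk' h h' (by omega)
  have hblock : List.replicate n a ++ (List.replicate k b ++ [a]) <+: crossWord a b n k := by
    simp [crossWord]
  have hblock' := (List.prefix_of_prefix_length_le hblock h (by simp; omega)).trans h'
  simp only [crossWord, List.append_assoc, List.prefix_append_right_inj] at hblock'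
  refine ⟨rfl, eq_of_replicate_append_cons_prefix hab.symm ?_ hblock'⟩
  simpa

lemma eq_of_prefix_of_suffix_crossWord (hab : a ≠ b) (hn : 0 < n) (hk : 0 < k) (hn' : 0 < n')
    (hk' : 0 < k') (hx : x <+: crossWord a b n k) (hx' : x <+: crossWord a b n' k')
    (hu : u <:+ crossWord a b n k) (hu' : u <:+ crossWord a b n' k')
    (hlen : n + k + max n k < x.length + u.length) : n = n' ∧ k = k' := by
  rw [← List.reverse_prefix, reverse_crossWord] at hu hu'
  rw [← u.length_reverse] at hlen
  by_cases hxlong : n + k < x.length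
  · exact eq_of_prefix_crossWord hab hk hk' hx hx' hxlong
  by_cases hulong : k + n < u.reverse.length
  · exact (eq_of_prefix_crossWord hab hn hn' hu hu' hulong).symm
  exact ⟨left_eq_of_prefix_crossWord hab hk hk' hx hx' (by omega),
    left_eq_of_prefix_crossWord hab hn hn' hu hu' (by omega)⟩

end CrossWord

theorem stmt_9_general {α : Type*} {a b : α} (hab : a ≠ b) :
    ¬ Language.IsContextFree
      {w : List α | ∃ n m : ℕ, 1 ≤ n ∧ 1 ≤ m ∧
        w = List.replicate n a ++ List.replicate (m + 1) b ++ List.replicate 2 a ++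
            List.replicate n b ++ List.replicate (m + 1) a} := by
  intro hL
  obtain ⟨p, hp⟩ := pumping_lemma_of_isContextFree hL
  obtain ⟨x, v, z, y, u, hw, hlen, hne, hpump⟩ := hp (crossWord a b (p + 1) (p + 2))
    ⟨p + 1, p + 1, by omega, by omega, rfl⟩ (by rw [length_crossWord]; omega)
  obtain ⟨n, m, hn, -, hw'⟩ := hpump 0
  replace hw' : crossWord a b n (m + 1) = x ++ z ++ u := by simpa [crossWord] using hw'.symm
  have hwlen := congrArg List.length hw
  have hwlen' := congrArg List.length hw'
  have hvy := List.length_pos_of_ne_nil hne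
  simp only [length_crossWord, List.length_append] at hwlen hwlen' hlen hvy
  obtain ⟨rfl, hm⟩ := eq_of_prefix_of_suffix_crossWord (x := x) (u := u) hab
    p.succ_pos (p + 1).succ_pos hn m.succ_pos
    ⟨v ++ z ++ y ++ u, by simp [hw]⟩ ⟨z ++ u, by simp [hw']⟩
    ⟨x ++ v ++ z ++ y, hw.symm⟩ ⟨x ++ z, hw'.symm⟩ (by omega)
  omega

/-- with `a = false`, `b = true`, the language
`L' = {aⁿ b^{m+1} a² bⁿ a^{m+1} | n, m ≥ 1}` is not context-free. -/
theorem stmt_9 :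
    ¬ Language.IsContextFree
      {w : List Bool | ∃ n m : ℕ, 1 ≤ n ∧ 1 ≤ m ∧
        w = List.replicate n false ++ List.replicate (m + 1) true ++
            List.replicate 2 false ++ List.replicate n true ++
            List.replicate (m + 1) false} :=
  stmt_9_general Bool.false_ne_true
end

section
/- Over the two-letter alphabet {a,b}, let L₁ = {aⁿ b a bⁿ a | n ≥ 1}, L₂ = {bᵐ a^{m+1} | m ≥ 1}, and R = {aⁱ bʲ a² bˡ aᵖ | i ≥ 1, j ≥ 2, l ≥ 1, p ≥ 2}. Then (L₁ ⧢ L₂) ∩ R = {aⁿ b^{m+1} a² bⁿ a^{m+1} | n, m ≥ 1}. -/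
/-!
Cut a shuffle of `u` and `v` along the five runs of `aⁱ bʲ a² bˡ aᵖ`: each run splits into a part
from `u` and a part from `v`. As `u = aⁿ b a bⁿ a` already has five runs, it contributes exactly its
runs in order. So `v = bᵐ a^{m+1}` contributes one letter to the middle `a²`; none of its `b`s come
after that letter and none of its `a`s before its `b`s, hence its parts are `ε, bᵐ, a, ε, aᵐ`.
-/

open List

variable {α : Type*} {a b : α}

namespace IsShuffle

theorem nil_right (u : List α) : IsShuffle u [] u := by
  induction u with
  | nil => exact .nil
  | cons x u ih => exact .left ih

theorem nil_left (v : List α) : IsShuffle [] v v := by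
  induction v with
  | nil => exact .nil
  | cons x v ih => exact .right ih

theorem append {u v w u' v' w' : List α} (h : IsShuffle u v w) (h' : IsShuffle u' v' w') :
    IsShuffle (u ++ u') (v ++ v') (w ++ w') := by
  induction h with
  | nil => exact h'
  | left _ ih => exact .left ih
  | right _ ih => exact .right ih

theorem append_iff {u v w₁ w₂ : List α} :
    IsShuffle u v (w₁ ++ w₂) ↔ ∃ u₁ u₂ v₁ v₂,
      u = u₁ ++ u₂ ∧ v = v₁ ++ v₂ ∧ IsShuffle u₁ v₁ w₁ ∧ IsShuffle u₂ v₂ w₂ := by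
  refine ⟨fun h ↦ ?_, fun ⟨_, _, _, _, hu, hv, h₁, h₂⟩ ↦ hu ▸ hv ▸ h₁.append h₂⟩
  induction w₁ generalizing u v with
  | nil => exact ⟨[], u, [], v, rfl, rfl, .nil, h⟩
  | cons x w₁ ih =>
    rw [cons_append] at h
    cases h with
    | left h =>
      obtain ⟨u₁, u₂, v₁, v₂, rfl, rfl, h₁, h₂⟩ := ih h
      exact ⟨x :: u₁, u₂, v₁, v₂, rfl, rfl, .left h₁, h₂⟩
    | right h =>
      obtain ⟨u₁, u₂, v₁, v₂, rfl, rfl, h₁, h₂⟩ := ih h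
      exact ⟨u₁, u₂, x :: v₁, v₂, rfl, rfl, .right h₁, h₂⟩

theorem nil_iff {u v : List α} : IsShuffle u v [] ↔ u = [] ∧ v = [] := by
  constructor
  · rintro ⟨⟩
    exact ⟨rfl, rfl⟩
  · rintro ⟨rfl, rfl⟩
    exact .nil

theorem replicate_iff {u v : List α} {k : ℕ} :
    IsShuffle u v (replicate k a) ↔
      ∃ i j, i + j = k ∧ u = replicate i a ∧ v = replicate j a := by
  constructor
  · intro h
    induction k generalizing u v with
    | zero => exact ⟨0, 0, rfl, nil_iff.1 h⟩
    | succ k ih =>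
      rw [replicate_succ] at h
      cases h with
      | left h =>
        obtain ⟨i, j, rfl, rfl, rfl⟩ := ih h
        exact ⟨i + 1, j, by omega, rfl, rfl⟩
      | right h =>
        obtain ⟨i, j, rfl, rfl, rfl⟩ := ih h
        exact ⟨i, j + 1, by omega, rfl, rfl⟩
  · rintro ⟨i, j, rfl, rfl, rfl⟩
    simpa only [append_nil, nil_append, replicate_append_replicate] using
      (nil_right (replicate i a)).append (nil_left (replicate j a))

end IsShuffle

/-- `alternatingRuns a b [n₁, n₂, n₃, …]` is the word `a^n₁ b^n₂ a^n₃ ⋯` with alternating letters.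
Exponents may be zero, so distinct lists of exponents can give the same word. -/
def alternatingRuns (a b : α) : List ℕ → List α
  | [] => []
  | n :: ns => replicate n a ++ alternatingRuns b a ns

theorem isShuffle_alternatingRuns_iff {u v : List α} {ks : List ℕ} :
    IsShuffle u v (alternatingRuns a b ks) ↔ ∃ ps : List (ℕ × ℕ),
      ps.map (fun p ↦ p.1 + p.2) = ks ∧
      u = alternatingRuns a b (ps.map Prod.fst) ∧ v = alternatingRuns a b (ps.map Prod.snd) := by
  induction ks generalizing a b u v with
  | nil => simp [alternatingRuns, IsShuffle.nil_iff]
  | cons k ks ih =>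
    simp only [alternatingRuns, IsShuffle.append_iff, IsShuffle.replicate_iff, ih]
    constructor
    · rintro ⟨_, _, _, _, rfl, rfl, ⟨i, j, rfl, rfl, rfl⟩, ps, rfl, rfl, rfl⟩
      exact ⟨(i, j) :: ps, rfl, rfl, rfl⟩
    · rintro ⟨ps, hps, rfl, rfl⟩
      obtain ⟨⟨i, j⟩, ps, rfl, rfl, rfl⟩ := map_eq_cons_iff.1 hps
      exact ⟨_, _, _, _, rfl, rfl, ⟨i, j, rfl, rfl, rfl⟩, ps, rfl, rfl, rfl⟩

theorem exists_eq_zero_cons_of_alternatingRuns_eq_cons (hab : a ≠ b) {ns : List ℕ} {t : List α}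
    (h : alternatingRuns a b ns = b :: t) : ∃ ns', ns = 0 :: ns' := by
  match ns with
  | [] => simp [alternatingRuns] at h
  | 0 :: ns' => exact ⟨ns', rfl⟩
  | (n + 1) :: _ => simp [alternatingRuns, replicate_succ, hab] at h

-- If the first run of `ms` were shorter than that of `ns`, its second run would be empty, and
-- deleting both would leave `ms` too few runs.
theorem eq_of_alternatingRuns_eq {a b : α} (hab : a ≠ b) {ms ns : List ℕ}
    (hns : ∀ n ∈ ns, n ≠ 0) (hlen : ms.length ≤ ns.length)
    (h : alternatingRuns a b ms = alternatingRuns a b ns) : ms = ns := by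
  match ms, ns with
  | [], [] => rfl
  | [], n :: ns => simp_all [alternatingRuns]
  | m :: ms, n :: ns =>
    obtain ⟨-, hns'⟩ := forall_mem_cons.1 hns
    simp only [length_cons, add_le_add_iff_right] at hlen
    simp only [alternatingRuns] at h
    obtain hmn | rfl | hnm := lt_trichotomy m n
    · obtain ⟨d, rfl⟩ := Nat.exists_eq_add_of_lt hmn
      rw [add_assoc, ← replicate_append_replicate, append_assoc, append_cancel_left_eq] at h
      obtain ⟨ms', hms⟩ := exists_eq_zero_cons_of_alternatingRuns_eq_cons hab.symm h
      simp only [hms, length_cons] at h hlen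
      have hms' : ms' = (d + 1) :: ns :=
        eq_of_alternatingRuns_eq hab (by simpa using hns') (by simp only [length_cons]; omega) h
      simp only [hms', length_cons] at hlen
      omega
    · rw [eq_of_alternatingRuns_eq hab.symm hns' hlen (append_cancel_left h)]
    · obtain ⟨d, rfl⟩ := Nat.exists_eq_add_of_lt hnm
      rw [add_assoc, ← replicate_append_replicate, append_assoc, append_cancel_left_eq] at h
      obtain ⟨ns', rfl⟩ := exists_eq_zero_cons_of_alternatingRuns_eq_cons hab.symm h.symm
      simp at hns'
termination_by ms.length
decreasing_by
  · simp only [hms, length_cons]; omega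
  · simp only [length_cons, Nat.lt_add_one]

theorem eq_of_alternatingRuns_eq_pair (hab : a ≠ b) {i j k l p m q : ℕ} (hm : m ≠ 0) (hk : k ≠ 0)
    (h : alternatingRuns a b [i, j, k, l, p] = alternatingRuns b a [m, q]) :
    i = 0 ∧ j = m ∧ l = 0 ∧ k + p = q := by
  classical
  have no_b_after_a : (alternatingRuns a b [i, j, k, l, p]).Pairwise fun x y ↦ x = a → y = a := by
    rw [h]
    simp [alternatingRuns, pairwise_append, pairwise_replicate, hab.symm]
  have hl : l = 0 := by
    by_contra hl
    simp [alternatingRuns, pairwise_append, hab.symm, hk, hl] at no_b_after_a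
  have hij : i = 0 ∨ j = 0 := by
    by_contra! hij
    simp [alternatingRuns, pairwise_append, hab.symm, hij] at no_b_after_a
  have hcount_a : i + (k + p) = q := by
    simpa [alternatingRuns, count_replicate, hab.symm] using congrArg (count a) h
  have hcount_b : j + l = m := by
    simpa [alternatingRuns, count_replicate, hab] using congrArg (count b) h
  omega

theorem isShuffle_alternatingRuns_five_pair_iff (hab : a ≠ b) {n₁ n₂ n₃ n₄ n₅ m c q i j l p : ℕ}
    (hn : ∀ n ∈ [n₁, n₂, n₃, n₄, n₅], n ≠ 0) (hm : m ≠ 0) (hc : c ≠ 0) :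
    IsShuffle (alternatingRuns a b [n₁, n₂, n₃, n₄, n₅]) (alternatingRuns b a [m, c + q])
        (alternatingRuns a b [i, j, n₃ + c, l, p]) ↔
      i = n₁ ∧ j = n₂ + m ∧ l = n₄ ∧ p = n₅ + q := by
  rw [isShuffle_alternatingRuns_iff]
  constructor
  · rintro ⟨ps, hps, hu, hv⟩
    have hlen : ps.length = 5 := by simpa using congrArg length hps
    have hfst := eq_of_alternatingRuns_eq hab hn (by simp [hlen]) hu.symm
    match ps, hlen with
    | [(i₁, i₂), (j₁, j₂), (k₁, k₂), (l₁, l₂), (p₁, p₂)], _ =>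
      simp only [map_cons, map_nil, cons.injEq, and_true] at hps hfst hv
      obtain rfl : k₂ = c := by omega
      have hsnd := eq_of_alternatingRuns_eq_pair hab hm hc hv.symm
      omega
  · rintro ⟨rfl, rfl, rfl, rfl⟩
    exact ⟨[(i, 0), (n₂, m), (n₃, c), (l, 0), (n₅, q)], by simp, by simp,
      by simp [alternatingRuns]⟩

theorem stmt_10_general (hab : a ≠ b) :
    langShuffle
        {w | ∃ n, 1 ≤ n ∧ w = replicate n a ++ [b, a] ++ replicate n b ++ [a]}
        {w | ∃ m, 1 ≤ m ∧ w = replicate m b ++ replicate (m + 1) a} ∩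
      {w | ∃ i j l p, w = replicate i a ++ replicate j b ++ replicate 2 a ++ replicate l b ++
        replicate p a} =
    {w | ∃ n m, 1 ≤ n ∧ 1 ≤ m ∧ w = replicate n a ++ replicate (m + 1) b ++ replicate 2 a ++
      replicate n b ++ replicate (m + 1) a} := by
  have shuffle_iff {n m i j l p : ℕ} (hn : 1 ≤ n) (hm : 1 ≤ m) :
      IsShuffle (replicate n a ++ [b, a] ++ replicate n b ++ [a])
          (replicate m b ++ replicate (m + 1) a)
          (replicate i a ++ replicate j b ++ replicate 2 a ++ replicate l b ++ replicate p a) ↔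
        i = n ∧ j = m + 1 ∧ l = n ∧ p = m + 1 := by
    have hpos : ∀ k ∈ [n, 1, 1, n, 1], k ≠ 0 := by simp [Nat.ne_of_gt hn]
    simpa [alternatingRuns, add_comm 1 m] using
      isShuffle_alternatingRuns_five_pair_iff hab (q := m) (i := i) (j := j) (l := l) (p := p)
        hpos (Nat.ne_of_gt hm) one_ne_zero
  ext w
  simp only [langShuffle, wordShuffle, Set.mem_inter_iff, Set.mem_iUnion, Set.mem_ofPred_eq,
    exists_prop]
  constructor
  · rintro ⟨⟨_, ⟨n, hn, rfl⟩, _, ⟨m, hm, rfl⟩, hw⟩, i, j, l, p, rfl⟩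
    obtain ⟨rfl, rfl, rfl, rfl⟩ := (shuffle_iff hn hm).1 hw
    exact ⟨_, m, hn, hm, rfl⟩
  · rintro ⟨n, m, hn, hm, rfl⟩
    exact ⟨⟨_, ⟨n, hn, rfl⟩, _, ⟨m, hm, rfl⟩, (shuffle_iff hn hm).2 ⟨rfl, rfl, rfl, rfl⟩⟩,
      n, m + 1, n, m + 1, rfl⟩

/-- with `a = false`, `b = true`,
`(L₁ ⧢ L₂) ∩ R = {aⁿ b^{m+1} a² bⁿ a^{m+1} | n, m ≥ 1}` where
`L₁ = {aⁿ b a bⁿ a | n ≥ 1}`, `L₂ = {bᵐ a^{m+1} | m ≥ 1}`, and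
`R = {aⁱ bʲ a² bˡ aᵖ | i ≥ 1, j ≥ 2, l ≥ 1, p ≥ 2}`. -/
theorem stmt_10 :
    langShuffle
        {w : List Bool | ∃ n : ℕ, 1 ≤ n ∧
          w = List.replicate n false ++ [true, false] ++ List.replicate n true ++ [false]}
        {w : List Bool | ∃ m : ℕ, 1 ≤ m ∧
          w = List.replicate m true ++ List.replicate (m + 1) false} ∩
      {w : List Bool | ∃ i j l p : ℕ, 1 ≤ i ∧ 2 ≤ j ∧ 1 ≤ l ∧ 2 ≤ p ∧
        w = List.replicate i false ++ List.replicate j true ++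
            List.replicate 2 false ++ List.replicate l true ++ List.replicate p false} =
    {w : List Bool | ∃ n m : ℕ, 1 ≤ n ∧ 1 ≤ m ∧
      w = List.replicate n false ++ List.replicate (m + 1) true ++
          List.replicate 2 false ++ List.replicate n true ++
          List.replicate (m + 1) false} := by
  refine Set.Subset.antisymm ?_ fun w hw ↦
    ⟨((stmt_10_general Bool.false_ne_true).superset hw).1, ?_⟩
  · rintro w ⟨hw, i, j, l, p, -, -, -, -, rfl⟩
    exact (stmt_10_general Bool.false_ne_true).subset ⟨hw, i, j, l, p, rfl⟩
  · obtain ⟨n, m, hn, hm, rfl⟩ := hw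
    exact ⟨n, m + 1, n, m + 1, hn, by omega, hn, by omega, rfl⟩
end

section
/- Over the two-letter alphabet {a,b}, let L₁ = ({aⁿ b^{n+1} | n ≥ 1})⁺ · {aᵐ | m ≥ 1} and L₂ = {a} · ({bⁿ a^{n+1} | n ≥ 1})⁺, where K⁺ = K · K* denotes Kleene plus and · denotes language concatenation. Then L₁ ∩ L₂ = {c₁¹ c₂² c₃³ ⋯ c_{2k+1}^{2k+1} | k ≥ 1}, i.e. the set of words that are concatenations of blocks whose j-th block (1 ≤ j ≤ 2k+1, k ≥ 1) consists of j copies of a if j is odd and j copies of b if j is even; equivalently, {a b² a³ b⁴ ⋯ a^{2k} ? pattern | k ≥ 1} = {a¹ b² a³ ⋯ aⁿ b^{n+1} a^{n+2} | n ≥ 1 odd}. -/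
open Computability

/-- Kleene plus: `K⁺ = K · K*`. -/
def kplus {α : Type*} (K : Language α) : Language α := K * K∗

/-- `{aⁿ b^{n+1} | n ≥ 1}` with `a = false`, `b = true`. -/
def Lab : Language Bool :=
  {w | ∃ n : ℕ, 1 ≤ n ∧ w = List.replicate n false ++ List.replicate (n + 1) true}

/-- `{aᵐ | m ≥ 1}`. -/
def Las : Language Bool := {w | ∃ m : ℕ, 1 ≤ m ∧ w = List.replicate m false}

/-- `{bⁿ a^{n+1} | n ≥ 1}`. -/
def Lba : Language Bool :=
  {w | ∃ n : ℕ, 1 ≤ n ∧ w = List.replicate n true ++ List.replicate (n + 1) false}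

/-!
A word splits uniquely into maximal runs of equal letters, so the two factorizations of a word of
the intersection can be compared run by run. By the first one, every run of `b`s is one letter
longer than the run of `a`s before it; by the second one, every run of `a`s after the initial `a`
is one letter longer than the run of `b`s before it. Hence the run lengths are `1, 2, 3, …`.
-/

section Staircase

variable {α : Type*}

theorem head?_replicate_append {n : ℕ} (hn : 1 ≤ n) (c : α) (x : List α) :
    (List.replicate n c ++ x).head? = some c := by
  simp [List.head?_replicate, Nat.ne_of_gt hn]

theorem replicate_append_inj {c : α} {m n : ℕ} {x y : List α}
    (hx : x.head? ≠ some c) (hy : y.head? ≠ some c)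
    (h : List.replicate m c ++ x = List.replicate n c ++ y) : m = n ∧ x = y := by
  induction m generalizing n with
  | zero => cases n <;> grind
  | succ m ih => cases n <;> grind

theorem replicate_ne_replicate_append_replicate_append {c d : α} (hcd : c ≠ d) {l m n : ℕ}
    (hn : 1 ≤ n) {x : List α} :
    List.replicate l c ≠ List.replicate m c ++ (List.replicate n d ++ x) := by
  intro h
  have d_mem : d ∈ List.replicate l c := by
    rw [h]
    simp [Nat.ne_of_gt hn]
  exact hcd (List.eq_of_mem_replicate d_mem).symm

/-- The language `{aⁿ bⁿ⁺¹ | n ≥ 1}`: `Lab` and `Lba` are its two instances over `Bool`. -/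
def risingPairs (a b : α) : Language α :=
  {w | ∃ n : ℕ, 1 ≤ n ∧ w = List.replicate n a ++ List.replicate (n + 1) b}

/-- The language `{aᵐ | m ≥ 1}` of the nonempty powers of one letter. -/
def letterPowers (a : α) : Language α := {w | ∃ m : ℕ, 1 ≤ m ∧ w = List.replicate m a}

/-- The word `aᵖ bᵖ⁺¹ aᵖ⁺² ⋯ aᵖ⁺²ᵏ`, with `2k + 1` runs numbered from `0`. -/
def staircase (a b : α) (p k : ℕ) : List α :=
  ((List.range (2 * k + 1)).map
    (fun j => List.replicate (j + p) (if j % 2 = 0 then a else b))).flatten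

theorem kplus_eq_iSup_pow (K : Language α) : kplus K = ⨆ k ≥ 1, K ^ k := by
  rw [iSup_ge_eq_iSup_nat_add]
  simp only [kplus, Language.kstar_eq_iSup_pow, Language.mul_iSup, pow_succ']

theorem mem_kplus_mul_iff {K M : Language α} {w : List α} :
    w ∈ kplus K * M ↔ ∃ k : ℕ, 1 ≤ k ∧ w ∈ K ^ k * M := by
  simp only [kplus_eq_iSup_pow, Language.iSup_mul, Language.mem_iSup, exists_prop, ge_iff_le]

theorem mem_mul_kplus_iff {K M : Language α} {w : List α} :
    w ∈ M * kplus K ↔ ∃ k : ℕ, 1 ≤ k ∧ w ∈ M * K ^ k := by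
  simp only [kplus_eq_iSup_pow, Language.mul_iSup, Language.mem_iSup, exists_prop, ge_iff_le]

variable {a b : α}

theorem mem_risingPairs_pow_succ_mul_iff {M : Language α} {k : ℕ} {w : List α} :
    w ∈ risingPairs a b ^ (k + 1) * M ↔ ∃ n : ℕ, 1 ≤ n ∧ ∃ v ∈ risingPairs a b ^ k * M,
      w = List.replicate n a ++ (List.replicate (n + 1) b ++ v) := by
  rw [pow_succ', mul_assoc, Language.mem_mul]
  constructor
  · rintro ⟨_, ⟨n, hn, rfl⟩, v, hv, rfl⟩
    exact ⟨n, hn, v, hv, List.append_assoc ..⟩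
  · rintro ⟨n, hn, v, hv, rfl⟩
    exact ⟨_, ⟨n, hn, rfl⟩, v, hv, List.append_assoc ..⟩

theorem mem_replicate_mul_risingPairs_pow_succ_iff {p k : ℕ} {w : List α} :
    w ∈ ({List.replicate p a} : Language α) * risingPairs b a ^ (k + 1) ↔
      ∃ n : ℕ, 1 ≤ n ∧ ∃ v ∈ ({List.replicate (n + 1) a} : Language α) * risingPairs b a ^ k,
        w = List.replicate p a ++ (List.replicate n b ++ v) := by
  simp only [pow_succ', Language.mem_mul]
  constructor
  · rintro ⟨_, rfl, _, ⟨_, ⟨n, hn, rfl⟩, v, hv, rfl⟩, rfl⟩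
    exact ⟨n, hn, _, ⟨_, rfl, v, hv, rfl⟩, by simp only [List.append_assoc]⟩
  · rintro ⟨n, hn, _, ⟨_, rfl, v, hv, rfl⟩, rfl⟩
    exact ⟨_, rfl, _, ⟨_, ⟨n, hn, rfl⟩, v, hv, rfl⟩, by simp only [List.append_assoc]⟩

theorem staircase_zero (a b : α) (p : ℕ) : staircase a b p 0 = List.replicate p a := by
  simp [staircase]

theorem staircase_succ (a b : α) (p k : ℕ) :
    staircase a b p (k + 1) =
      List.replicate p a ++ (List.replicate (p + 1) b ++ staircase a b (p + 2) k) := by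
  have two_add_add (j : ℕ) : 2 + j + p = j + (p + 2) := by omega
  rw [staircase, show 2 * (k + 1) + 1 = 2 + (2 * k + 1) by ring, List.range_add]
  simp [staircase, List.range_succ, Function.comp_def, two_add_add, Nat.add_comm 1 p]

theorem staircase_mem_risingPairs_pow_mul_letterPowers {p : ℕ} (hp : 1 ≤ p) (k : ℕ) :
    staircase a b p k ∈ risingPairs a b ^ k * letterPowers a := by
  induction k generalizing p with
  | zero => simpa only [pow_zero, one_mul, staircase_zero] using ⟨p, hp, rfl⟩
  | succ k ih =>
    exact mem_risingPairs_pow_succ_mul_iff.2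
      ⟨p, hp, _, ih (Nat.le_add_right_of_le hp), staircase_succ a b p k⟩

theorem staircase_mem_replicate_mul_risingPairs_pow (p k : ℕ) :
    staircase a b p k ∈ ({List.replicate p a} : Language α) * risingPairs b a ^ k := by
  induction k generalizing p with
  | zero =>
    rw [pow_zero, mul_one, staircase_zero]
    exact Set.mem_singleton _
  | succ k ih =>
    exact mem_replicate_mul_risingPairs_pow_succ_iff.2
      ⟨p + 1, p.succ_pos, _, ih (p + 2), staircase_succ a b p k⟩

theorem head?_of_mem_risingPairs_pow_mul_letterPowers {k : ℕ} {w : List α}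
    (hw : w ∈ risingPairs a b ^ k * letterPowers a) : w.head? = some a := by
  cases k with
  | zero =>
    rw [pow_zero, one_mul] at hw
    obtain ⟨m, hm, rfl⟩ := hw
    simpa only [List.append_nil] using head?_replicate_append hm a []
  | succ k =>
    obtain ⟨n, hn, v, -, rfl⟩ := mem_risingPairs_pow_succ_mul_iff.1 hw
    exact head?_replicate_append hn a _

theorem head?_of_mem_replicate_mul {p : ℕ} (hp : 1 ≤ p) {K : Language α} {w : List α}
    (hw : w ∈ ({List.replicate p a} : Language α) * K) : w.head? = some a := by
  obtain ⟨_, rfl, v, -, rfl⟩ := Language.mem_mul.1 hw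
  exact head?_replicate_append hp a v

theorem eq_staircase_of_mem (hab : a ≠ b) {p k l : ℕ} {w : List α}
    (hleft : w ∈ risingPairs a b ^ k * letterPowers a)
    (hright : w ∈ ({List.replicate p a} : Language α) * risingPairs b a ^ l) :
    w = staircase a b p k := by
  have b_run_head {n : ℕ} (hn : 1 ≤ n) (x : List α) :
      (List.replicate n b ++ x).head? ≠ some a := by
    simpa only [head?_replicate_append hn, ne_eq, Option.some.injEq] using hab.symm
  induction k generalizing p l w with
  | zero =>
    rw [pow_zero, one_mul] at hleft
    obtain ⟨m, -, rfl⟩ := hleft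
    cases l with
    | zero =>
      rw [pow_zero, mul_one] at hright
      rw [staircase_zero]
      exact hright
    | succ l =>
      obtain ⟨q, hq, y, -, h⟩ := mem_replicate_mul_risingPairs_pow_succ_iff.1 hright
      exact (replicate_ne_replicate_append_replicate_append hab hq h).elim
  | succ k ih =>
    obtain ⟨n, -, x, hx, rfl⟩ := mem_risingPairs_pow_succ_mul_iff.1 hleft
    cases l with
    | zero =>
      rw [pow_zero, mul_one] at hright
      exact (replicate_ne_replicate_append_replicate_append hab n.succ_pos hright.symm).elim
    | succ l =>
      obtain ⟨q, hq, y, hy, h⟩ := mem_replicate_mul_risingPairs_pow_succ_iff.1 hright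
      have x_head : x.head? ≠ some b := by
        simpa only [head?_of_mem_risingPairs_pow_mul_letterPowers hx, ne_eq, Option.some.injEq]
      have y_head : y.head? ≠ some b := by
        simpa only [head?_of_mem_replicate_mul q.succ_pos hy, ne_eq, Option.some.injEq]
      obtain ⟨rfl, htail⟩ := replicate_append_inj (b_run_head n.succ_pos x) (b_run_head hq y) h
      obtain ⟨rfl, rfl⟩ := replicate_append_inj x_head y_head htail
      rw [staircase_succ, ← ih hx hy]

theorem stmt_11_general (hab : a ≠ b) {p : ℕ} (hp : 1 ≤ p) :
    (kplus (risingPairs a b) * letterPowers a) ⊓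
        (({List.replicate p a} : Language α) * kplus (risingPairs b a)) =
      {w : List α | ∃ k : ℕ, 1 ≤ k ∧ w = staircase a b p k} := by
  ext w
  constructor
  · rintro ⟨hleft, hright⟩
    obtain ⟨k, hk, hleft⟩ := mem_kplus_mul_iff.1 hleft
    obtain ⟨l, -, hright⟩ := mem_mul_kplus_iff.1 hright
    exact ⟨k, hk, eq_staircase_of_mem hab hleft hright⟩
  · rintro ⟨k, hk, rfl⟩
    exact ⟨mem_kplus_mul_iff.2 ⟨k, hk, staircase_mem_risingPairs_pow_mul_letterPowers hp k⟩,
      mem_mul_kplus_iff.2 ⟨k, hk, staircase_mem_replicate_mul_risingPairs_pow p k⟩⟩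

end Staircase

/-- `({aⁿ b^{n+1} | n ≥ 1})⁺ · {aᵐ | m ≥ 1} ∩ {a} · ({bⁿ a^{n+1} | n ≥ 1})⁺`
equals `{a¹ b² a³ ⋯ a^{2k+1} | k ≥ 1}` (blocks `c_j^j`, `j = 1, …, 2k+1`,
where `c_j = a` for odd `j` and `c_j = b` for even `j`). -/
theorem stmt_11 :
    (kplus Lab * Las) ⊓ (({[false]} : Language Bool) * kplus Lba) =
    {w : List Bool | ∃ k : ℕ, 1 ≤ k ∧
      w = ((List.range (2 * k + 1)).map
        (fun j => List.replicate (j + 1) (if j % 2 = 0 then false else true))).flatten} :=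
  stmt_11_general Bool.false_ne_true le_rfl
end

section
/- If L₁ and L₂ are regular languages over a finite alphabet α, then their shuffle L₁ ⧢ L₂ is a regular language. -/
/-!
Cutting an interleaving of `u` and `v` after its prefix `w` cuts `u` and `v` as well, so the left
quotient of `L₁ ⧢ L₂` by `w` is the union of the shuffles `(u⁻¹ L₁) ⧢ (v⁻¹ L₂)` over all pairs
`(u, v)` that have `w` as an interleaving. If `L₁` and `L₂` have finitely many left quotients, then
only finitely many such shuffles exist, hence only finitely many unions of them, and `L₁ ⧢ L₂` is
regular by the Myhill–Nerode theorem.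
-/

section Words

variable {α : Type*} {u v u₁ u₂ v₁ v₂ w x : List α}

theorem isShuffle_append (hw : IsShuffle u₁ v₁ w) (hx : IsShuffle u₂ v₂ x) :
    IsShuffle (u₁ ++ u₂) (v₁ ++ v₂) (w ++ x) := by
  induction hw with
  | nil => exact hx
  | left _ ih => exact ih.left
  | right _ ih => exact ih.right

theorem isShuffle_append_iff :
    IsShuffle u v (w ++ x) ↔
      ∃ u₁ v₁ u₂ v₂, u₁ ++ u₂ = u ∧ v₁ ++ v₂ = v ∧ IsShuffle u₁ v₁ w ∧ IsShuffle u₂ v₂ x := by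
  refine ⟨fun h ↦ ?_, ?_⟩
  · induction w generalizing u v with
    | nil => exact ⟨[], [], u, v, rfl, rfl, .nil, h⟩
    | cons a w ih =>
      cases h with
      | left h =>
        obtain ⟨u₁, v₁, u₂, v₂, rfl, rfl, hw, hx⟩ := ih h
        exact ⟨a :: u₁, v₁, u₂, v₂, rfl, rfl, hw.left, hx⟩
      | right h =>
        obtain ⟨u₁, v₁, u₂, v₂, rfl, rfl, hw, hx⟩ := ih h
        exact ⟨u₁, a :: v₁, u₂, v₂, rfl, rfl, hw.right, hx⟩
  · rintro ⟨u₁, v₁, u₂, v₂, rfl, rfl, hw, hx⟩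
    exact isShuffle_append hw hx

end Words

section Languages

variable {α : Type*} {L₁ L₂ : Language α}

/-- The shuffle `langShuffle L₁ L₂` as an operation on `Language α`. Since `Language α` is not
reducible to `Set (List α)`, this keeps membership, suprema and left quotients those of
languages. -/
def languageShuffle (L₁ L₂ : Language α) : Language α := langShuffle L₁ L₂

theorem mem_languageShuffle {w : List α} :
    w ∈ languageShuffle L₁ L₂ ↔ ∃ u ∈ L₁, ∃ v ∈ L₂, IsShuffle u v w := by
  change w ∈ ⋃ u ∈ L₁, ⋃ v ∈ L₂, wordShuffle u v ↔ _
  simp only [Set.mem_iUnion, exists_prop, wordShuffle, Set.mem_ofPred_eq]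

theorem leftQuotient_languageShuffle (L₁ L₂ : Language α) (w : List α) :
    (languageShuffle L₁ L₂).leftQuotient w =
      ⨆ p ∈ {p : List α × List α | IsShuffle p.1 p.2 w},
        languageShuffle (L₁.leftQuotient p.1) (L₂.leftQuotient p.2) := by
  ext x
  simp only [Language.mem_leftQuotient, Language.mem_iSup, exists_prop, Prod.exists,
    Set.mem_ofPred_eq, mem_languageShuffle]
  constructor
  · rintro ⟨u, hu, v, hv, h⟩
    obtain ⟨u₁, v₁, u₂, v₂, rfl, rfl, hw, hx⟩ := isShuffle_append_iff.1 h
    exact ⟨u₁, v₁, hw, u₂, hu, v₂, hv, hx⟩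
  · rintro ⟨u₁, v₁, hw, u₂, hu, v₂, hv, hx⟩
    exact ⟨u₁ ++ u₂, hu, v₁ ++ v₂, hv, isShuffle_append hw hx⟩

theorem finite_range_leftQuotient_languageShuffle (h₁ : (Set.range L₁.leftQuotient).Finite)
    (h₂ : (Set.range L₂.leftQuotient).Finite) :
    (Set.range (languageShuffle L₁ L₂).leftQuotient).Finite := by
  let quotientShuffles : Set (Language α) :=
    Set.image2 languageShuffle (Set.range L₁.leftQuotient) (Set.range L₂.leftQuotient)
  have hfinite : (sSup '' 𝒫 quotientShuffles).Finite := (h₁.image2 _ h₂).powerset.image sSup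
  refine hfinite.subset ?_
  rintro _ ⟨w, rfl⟩
  rw [leftQuotient_languageShuffle, ← sSup_image]
  refine Set.mem_image_of_mem sSup ?_
  rintro _ ⟨⟨u, v⟩, -, rfl⟩
  exact Set.mem_image2_of_mem (Set.mem_range_self u) (Set.mem_range_self v)

theorem stmt_16_general (h₁ : L₁.IsRegular) (h₂ : L₂.IsRegular) :
    Language.IsRegular (langShuffle L₁ L₂ : Set (List α)) :=
  Language.IsRegular.of_finite_range_leftQuotient (L := languageShuffle L₁ L₂) <|
    finite_range_leftQuotient_languageShuffle
      h₁.finite_range_leftQuotient h₂.finite_range_leftQuotient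

end Languages

/-- the shuffle of two regular languages over a finite alphabet is
regular. -/
theorem stmt_16 {α : Type} [Fintype α] (L₁ L₂ : Language α)
    (h₁ : L₁.IsRegular) (h₂ : L₂.IsRegular) :
    Language.IsRegular (langShuffle L₁ L₂ : Set (List α)) :=
  stmt_16_general h₁ h₂
end
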